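/- Fix s ∈ (1/2, 1) and n ∈ ℕ, and let A : ℤ → Matrix (Fin n) (Fin n) ℂ satisfy ∑_{k∈ℤ} (1+|k|)^{2s} ‖A(k)‖² < ∞. Then the commutator [A, Δ^{s−1} ∘ d/dt] is a compact operator from H^s to H^{1−s}: for every sequence of sequences u_m : ℤ → (Fin n → ℂ) with ∑_{k∈ℤ} (1+|k|)^{2s} ‖u_m(k)‖² ≤ C² for all m (for some constant C), setting w_m(k) := ∑_{h∈ℤ} ( |h|^{2(s−1)} h − |k|^{2(s−1)} k ) A(k−h) u_m(h) (with |m|^{2(s−1)} m := 0 for m = 0), there is a subsequence (m_j) such that ∑_{k∈ℤ} (1+|k|)^{2(1−s)} ‖w_{m_i}(k) − w_{m_j}(k)‖² → 0 as i, j → ∞. -/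

import Mathlib

/-!
The commutator is Hilbert–Schmidt. Write `W k = 1 + |k|` and `f k = |k|^{2(s-1)} k`. The elementary
estimate `W(k)^{1-s} |f h - f k| ≤ 2 W(k-h)^s` (`symbol_bound`) shows that, in the weighted
coordinates `v(h) = W(h)^s ‖u(h)‖` on the source and `W(k)^{1-s} ‖w(k)‖` on the target, the operator
is dominated by the kernel `a(k-h) b(h)` with `a(l) = 2 W(l)^s ‖A(l)‖` and `b(h) = W(h)^{-s}`. Both
sequences are square summable, `b` because `2s > 1`, so the kernel is square summable on `ℤ × ℤ`.

Compactness follows by a diagonal argument: an `H^s`-bounded sequence is bounded in each coordinate,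
so by Tychonoff a subsequence converges coordinatewise. For differences along this subsequence,
dominated convergence in `h` and then in `k` gives convergence to zero in `H^{1-s}`
(`sum_sq_tendsto_zero`). The dominating functions are a multiple of `a(k-h) b(h)` in `h`, and, by
Cauchy–Schwarz, a multiple of the convolution `(a² * b²)(k)` in `k`.
-/

open Matrix Filter

attribute [local instance] Matrix.linftyOpNormedAddCommGroup

/-- The symbol estimate for arguments of the same sign, through
`x^{-2θ} x - y^{-2θ} y ≤ x^{-2θ} (x - y)` for `0 ≤ y ≤ x`. -/
lemma symbol_bound_same {θ x y : ℝ} (h0 : 0 < θ) (h1 : θ < 1 / 2) (hy : 0 ≤ y) (hxy : y + 1 ≤ x) :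
    (1 + x) ^ θ * |x ^ (-2 * θ) * x - y ^ (-2 * θ) * y| ≤ 2 * (1 + (x - y)) ^ (1 - θ) := by
  have hx : 0 < x := by linarith
  have hd : 0 < x - y := by linarith
  have e1 : y ^ (-2 * θ) * y ≥ x ^ (-2 * θ) * y := by
    rcases hy.eq_or_lt with h | h
    · simp [← h]
    · exact mul_le_mul_of_nonneg_right
        (Real.rpow_le_rpow_of_nonpos h (by linarith) (by linarith)) hy
  have e2 : y ^ (-2 * θ) * y ≤ x ^ (-2 * θ) * x := by
    rcases hy.eq_or_lt with h | h
    · rw [← h]; simp; positivity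
    · have key : ∀ z : ℝ, 0 < z → z ^ (-2 * θ) * z = z ^ (1 - 2 * θ) := fun z hz => by
        rw [← Real.rpow_add_one hz.ne']; congr 1; ring
      rw [key y h, key x hx]
      exact Real.rpow_le_rpow hy (by linarith) (by linarith)
  rw [abs_of_nonneg (by linarith)]
  have e3 : (1 + x) ^ θ ≤ 2 * x ^ θ := by
    calc (1 + x) ^ θ ≤ (2 * x) ^ θ := Real.rpow_le_rpow (by linarith) (by linarith) h0.le
      _ = 2 ^ θ * x ^ θ := Real.mul_rpow (by norm_num) hx.le
      _ ≤ 2 ^ (1 : ℝ) * x ^ θ := by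
        gcongr
        · norm_num
        · linarith
      _ = 2 * x ^ θ := by norm_num
  calc (1 + x) ^ θ * (x ^ (-2 * θ) * x - y ^ (-2 * θ) * y)
      ≤ (2 * x ^ θ) * (x ^ (-2 * θ) * (x - y)) := by
        gcongr
        linarith
    _ = 2 * (x ^ (-θ) * (x - y)) := by
        have : x ^ (-θ) = x ^ θ * x ^ (-2 * θ) := by
          rw [← Real.rpow_add hx]; congr 1; ring
        rw [this]; ring
    _ ≤ 2 * ((x - y) ^ (-θ) * (x - y)) := by
        have := Real.rpow_le_rpow_of_nonpos hd (by linarith : x - y ≤ x) (by linarith : -θ ≤ 0)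
        gcongr
    _ = 2 * (x - y) ^ (1 - θ) := by
        rw [← Real.rpow_add_one hd.ne']; congr 2; ring
    _ ≤ _ := by
        gcongr 2 * ?_
        exact Real.rpow_le_rpow hd.le (by linarith) (by linarith)

lemma symbol_bound_opp {θ x y : ℝ} (h0 : 0 < θ) (h1 : θ < 1 / 2) (hx : 0 ≤ x) (hy : 0 ≤ y) :
    (1 + x) ^ θ * |x ^ (-2 * θ) * x + y ^ (-2 * θ) * y| ≤ 2 * (1 + (x + y)) ^ (1 - θ) := by
  have key : ∀ z : ℝ, 0 ≤ z → z ≤ x + y → z ^ (-2 * θ) * z ≤ (1 + (x + y)) ^ (1 - 2 * θ) := by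
    intro z hz hzz
    rcases hz.eq_or_lt with h | h
    · rw [← h]; simp; positivity
    · rw [← Real.rpow_add_one h.ne', show -2 * θ + 1 = 1 - 2 * θ by ring]
      exact Real.rpow_le_rpow hz (by linarith) (by linarith)
  rw [abs_of_nonneg (by positivity)]
  calc _ ≤ (1 + (x + y)) ^ θ * ((1 + (x + y)) ^ (1 - 2 * θ) + (1 + (x + y)) ^ (1 - 2 * θ)) := by
        gcongr
        · linarith
        · exact key x hx (by linarith)
        · exact key y hy (by linarith)
    _ = 2 * (1 + (x + y)) ^ (1 - θ) := by
        have : (1 + (x + y)) ^ (1 - θ) = (1 + (x + y)) ^ θ * (1 + (x + y)) ^ (1 - 2 * θ) := by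
          rw [← Real.rpow_add (by positivity)]; congr 1; ring
        rw [this]; ring

/-- The symbol estimate over the reals. The unit gap between distinct arguments keeps the larger
modulus at least `1`. -/
lemma symbol_bound_real {θ : ℝ} (h0 : 0 < θ) (h1 : θ < 1 / 2) (x y : ℝ)
    (hxy : x = y ∨ x + 1 ≤ y ∨ y + 1 ≤ x) :
    (1 + |x|) ^ θ * |(|y| ^ (-2 * θ) * y - |x| ^ (-2 * θ) * x)| ≤
      2 * (1 + |x - y|) ^ (1 - θ) := by
  have same : ∀ x y : ℝ, 0 ≤ x → 0 ≤ y → (x = y ∨ x + 1 ≤ y ∨ y + 1 ≤ x) →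
      (1 + x) ^ θ * |y ^ (-2 * θ) * y - x ^ (-2 * θ) * x| ≤ 2 * (1 + |x - y|) ^ (1 - θ) := by
    intro x y hx hy h
    rcases h with h | h | h
    · subst h; simp
    · rw [abs_sub_comm x y, abs_of_nonneg (by linarith : 0 ≤ y - x)]
      refine le_trans ?_ (symbol_bound_same h0 h1 hx h)
      gcongr
      linarith
    · rw [abs_sub_comm, abs_of_nonneg (by linarith : 0 ≤ x - y)]
      exact symbol_bound_same h0 h1 hy h
  rcases le_total 0 x with hx | hx <;> rcases le_total 0 y with hy | hy
  · rw [abs_of_nonneg hx, abs_of_nonneg hy]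
    exact same x y hx hy hxy
  · rw [abs_of_nonneg hx, abs_of_nonpos hy, abs_of_nonneg (by linarith : 0 ≤ x - y)]
    have := symbol_bound_opp h0 h1 hx (neg_nonneg.2 hy)
    rw [abs_sub_comm]
    convert this using 3 <;> ring_nf
  · rw [abs_of_nonpos hx, abs_of_nonneg hy, abs_of_nonpos (by linarith : x - y ≤ 0)]
    have := symbol_bound_opp h0 h1 (neg_nonneg.2 hx) hy
    rw [abs_sub_comm, ← abs_neg]
    convert this using 3 <;> ring_nf
  · rw [abs_of_nonpos hx, abs_of_nonpos hy]
    have := same (-x) (-y) (neg_nonneg.2 hx) (neg_nonneg.2 hy)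
      (by rcases hxy with h | h | h
          · left; rw [h]
          · right; right; linarith
          · right; left; linarith)
    rw [abs_sub_comm, ← abs_neg, abs_sub_comm x y]
    rw [abs_sub_comm] at this
    convert this using 3 <;> ring_nf

/-- The commutator symbol gains `1 - s` derivatives at `k` at the cost of `s` derivatives at
`k - h`, which are the ones available on `A`. -/
lemma symbol_bound {s : ℝ} (hs1 : 1 / 2 < s) (hs2 : s < 1) (k h : ℤ) :
    ((1 + |k| : ℤ) : ℝ) ^ (1 - s) *
      |((|h| : ℤ) : ℝ) ^ (2 * (s - 1)) * (h : ℝ) - ((|k| : ℤ) : ℝ) ^ (2 * (s - 1)) * (k : ℝ)| ≤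
      2 * ((1 + |k - h| : ℤ) : ℝ) ^ s := by
  have hkh : (k : ℝ) = h ∨ (k : ℝ) + 1 ≤ h ∨ (h : ℝ) + 1 ≤ k := by
    have : k = h ∨ k + 1 ≤ h ∨ h + 1 ≤ k := by omega
    exact_mod_cast this
  have := symbol_bound_real (θ := 1 - s) (by linarith) (by linarith) (k : ℝ) (h : ℝ) hkh
  push_cast
  rw [show 2 * (s - 1) = -2 * (1 - s) by ring]
  simpa using this

lemma summable_weight {s : ℝ} (hs1 : 1 / 2 < s) :
    Summable (fun h : ℤ => (((1 + |h| : ℤ) : ℝ) ^ (-s)) ^ 2) := by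
  have h1 : Summable (fun h : ℤ => |(h : ℝ)| ^ (-(2 * s))) :=
    Real.summable_abs_int_rpow (by linarith)
  have h2 : Summable (fun h : ℤ => if h = 0 then (1 : ℝ) else 0) :=
    (hasSum_ite_eq (0 : ℤ) (1 : ℝ)).summable
  refine Summable.of_nonneg_of_le (fun h => by positivity) (fun h => ?_) (h1.add h2)
  have hW : (0 : ℝ) < ((1 + |h| : ℤ) : ℝ) := by positivity
  rw [← Real.rpow_mul_natCast hW.le, show -s * ((2 : ℕ) : ℝ) = -(2 * s) by push_cast; ring]
  push_cast
  by_cases hh : h = 0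
  · subst hh
    simp
    positivity
  · simp only [hh, if_false, add_zero]
    have : (0 : ℝ) < |(h : ℝ)| := by positivity
    exact Real.rpow_le_rpow_of_nonpos this (by linarith) (by linarith)

lemma cauchy_schwarz_tsum {p q : ℤ → ℝ} (hp0 : ∀ i, 0 ≤ p i) (hq0 : ∀ i, 0 ≤ q i)
    (hp : Summable (fun i => p i ^ 2)) (hq : Summable (fun i => q i ^ 2)) :
    Summable (fun i => p i * q i) ∧
      (∑' i, p i * q i) ^ 2 ≤ (∑' i, p i ^ 2) * (∑' i, q i ^ 2) := by
  have hc : Real.HolderConjugate 2 2 := by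
    rw [Real.holderConjugate_iff]; norm_num
  have hs : Summable (fun i => p i * q i) := by
    refine Summable.of_nonneg_of_le (fun i => mul_nonneg (hp0 i) (hq0 i)) (fun i => ?_) (hp.add hq)
    nlinarith [sq_nonneg (p i - q i), sq_nonneg (p i), sq_nonneg (q i)]
  refine ⟨hs, ?_⟩
  have h := Real.inner_le_Lp_mul_Lq_tsum_of_nonneg hc hp0 hq0
    (by simpa using hp) (by simpa using hq)
  simp only [Real.rpow_two, ← Real.sqrt_eq_rpow] at h
  have h0 : 0 ≤ ∑' i, p i * q i := tsum_nonneg fun i => mul_nonneg (hp0 i) (hq0 i)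
  calc _ ≤ (√(∑' i, p i ^ 2) * √(∑' i, q i ^ 2)) ^ 2 := pow_le_pow_left₀ h0 h 2
    _ = _ := by
      rw [mul_pow, Real.sq_sqrt (tsum_nonneg fun i => sq_nonneg _),
        Real.sq_sqrt (tsum_nonneg fun i => sq_nonneg _)]

/-- A kernel operator dominated by the Hilbert–Schmidt kernel `a(k-h) b(h)` maps an `ℓ²`-bounded
family that tends to zero coordinatewise to a family tending to zero in `ℓ²`. -/
lemma sum_sq_tendsto_zero {ι : Type*} {l : Filter ι} {a b : ℤ → ℝ} (ha0 : ∀ i, 0 ≤ a i)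
    (hb0 : ∀ i, 0 ≤ b i) (ha : Summable (fun i => a i ^ 2)) (hb : Summable (fun i => b i ^ 2))
    {v : ι → ℤ → ℝ} (hv0 : ∀ p h, 0 ≤ v p h) (hv : ∀ p, Summable (fun h => v p h ^ 2))
    {D : ℝ} (hD : ∀ p, ∑' h, v p h ^ 2 ≤ D) (hlim : ∀ h, Tendsto (fun p => v p h) l (nhds 0))
    {N : ι → ℤ → ℝ} (hN0 : ∀ p k, 0 ≤ N p k)
    (hN : ∀ p k, N p k ≤ ∑' h, a (k - h) * b h * v p h) :
    (∀ p, Summable (fun k => N p k ^ 2)) ∧ Tendsto (fun p => ∑' k, N p k ^ 2) l (nhds 0) := by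
  have hvB : ∀ p h, v p h ≤ √D := fun p h => Real.le_sqrt_of_sq_le
    (((hv p).le_tsum h fun _ _ => sq_nonneg _).trans (hD p))
  have hS : Summable (fun x : ℤ × ℤ => (a (x.1 - x.2) * b x.2) ^ 2) := by
    have h1 := ha.mul_of_nonneg hb (fun i => sq_nonneg _) (fun i => sq_nonneg _)
    let e : ℤ × ℤ ≃ ℤ × ℤ :=
      { toFun := fun x => (x.1 - x.2, x.2)
        invFun := fun x => (x.1 + x.2, x.2)
        left_inv := fun x => by simp
        right_inv := fun x => by simp }
    refine ((e.summable_iff).2 h1).congr fun x => ?_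
    simp [e, mul_pow]
  have hab : ∀ k, Summable (fun h => a (k - h) * b h) := fun k =>
    (cauchy_schwarz_tsum (fun h => ha0 (k - h)) hb0
      (((Equiv.subLeft k).summable_iff (f := fun i => a i ^ 2)).2 ha) hb).1
  have hdom : ∀ p k, N p k ^ 2 ≤ (∑' h, (a (k - h) * b h) ^ 2) * D := fun p k =>
    calc N p k ^ 2 ≤ (∑' h, a (k - h) * b h * v p h) ^ 2 :=
          pow_le_pow_left₀ (hN0 p k) (hN p k) 2
      _ ≤ _ := (cauchy_schwarz_tsum (fun h => mul_nonneg (ha0 _) (hb0 h)) (hv0 p)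
          (hS.prod_factor k) (hv p)).2
      _ ≤ _ := mul_le_mul_of_nonneg_left (hD p) (tsum_nonneg fun _ => sq_nonneg _)
  have hbound : Summable (fun k => (∑' h, (a (k - h) * b h) ^ 2) * D) := hS.prod.mul_right D
  refine ⟨fun p => Summable.of_nonneg_of_le (fun k => sq_nonneg _) (hdom p) hbound, ?_⟩
  have hk : ∀ k, Tendsto (fun p => N p k ^ 2) l (nhds 0) := by
    intro k
    have h1 : Tendsto (fun p => ∑' h, a (k - h) * b h * v p h) l (nhds (∑' _ : ℤ, (0 : ℝ))) := by
      refine tendsto_tsum_of_dominated_convergence ((hab k).mul_right √D) (fun h => ?_)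
        (Eventually.of_forall fun p h => ?_)
      · simpa using (hlim h).const_mul (a (k - h) * b h)
      · have hc := mul_nonneg (ha0 (k - h)) (hb0 h)
        rw [Real.norm_of_nonneg (mul_nonneg hc (hv0 p h))]
        exact mul_le_mul_of_nonneg_left (hvB p h) hc
    rw [tsum_zero] at h1
    simpa using (squeeze_zero (fun p => hN0 p k) (fun p => hN p k) h1).pow 2
  have := tendsto_tsum_of_dominated_convergence hbound hk
    (Eventually.of_forall fun p k => by
      rw [Real.norm_of_nonneg (sq_nonneg _)]; exact hdom p k)
  simpa using this

/-- Fix `s ∈ (1/2, 1)` and let `A : ℤ → Matrix (Fin n) (Fin n) ℂ` satisfy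
`∑_k (1+|k|)^{2s} ‖A(k)‖² < ∞`. Then the commutator `[A, Δ^{s−1} ∘ d/dt]` is a compact
operator from `H^s` to `H^{1−s}`: for any `H^s`-bounded sequence `(u_m)`, setting
`w_m(k) := ∑_h (|h|^{2(s−1)} h − |k|^{2(s−1)} k) A(k−h) u_m(h)`, some subsequence of
`(w_m)` is Cauchy in the `H^{1−s}`-norm. -/
theorem stmt7 (s : ℝ) (hs1 : 1 / 2 < s) (hs2 : s < 1) (n : ℕ)
    (A : ℤ → Matrix (Fin n) (Fin n) ℂ)
    (hA : Summable (fun k : ℤ => ((1 + |k| : ℤ) : ℝ) ^ (2 * s) * ‖A k‖ ^ 2))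
    (C : ℝ) (u : ℕ → ℤ → (Fin n → ℂ))
    (hu : ∀ m, Summable (fun k : ℤ => ((1 + |k| : ℤ) : ℝ) ^ (2 * s) * ‖u m k‖ ^ 2) ∧
      (∑' k : ℤ, ((1 + |k| : ℤ) : ℝ) ^ (2 * s) * ‖u m k‖ ^ 2) ≤ C ^ 2) :
    ∃ φ : ℕ → ℕ, StrictMono φ ∧
      (∀ i j : ℕ, Summable (fun k : ℤ => ((1 + |k| : ℤ) : ℝ) ^ (2 * (1 - s)) *
        ‖(∑' h : ℤ,
            (((|h| : ℤ) : ℝ) ^ (2 * (s - 1)) * (h : ℝ) - ((|k| : ℤ) : ℝ) ^ (2 * (s - 1)) * (k : ℝ)) •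
              (A (k - h)).mulVec (u (φ i) h))
          - (∑' h : ℤ,
            (((|h| : ℤ) : ℝ) ^ (2 * (s - 1)) * (h : ℝ) - ((|k| : ℤ) : ℝ) ^ (2 * (s - 1)) * (k : ℝ)) •
              (A (k - h)).mulVec (u (φ j) h))‖ ^ 2)) ∧
      Tendsto (fun p : ℕ × ℕ =>
          ∑' k : ℤ, ((1 + |k| : ℤ) : ℝ) ^ (2 * (1 - s)) *
            ‖(∑' h : ℤ,
                (((|h| : ℤ) : ℝ) ^ (2 * (s - 1)) * (h : ℝ) - ((|k| : ℤ) : ℝ) ^ (2 * (s - 1)) * (k : ℝ)) •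
                  (A (k - h)).mulVec (u (φ p.1) h))
              - (∑' h : ℤ,
                (((|h| : ℤ) : ℝ) ^ (2 * (s - 1)) * (h : ℝ) - ((|k| : ℤ) : ℝ) ^ (2 * (s - 1)) * (k : ℝ)) •
                  (A (k - h)).mulVec (u (φ p.2) h))‖ ^ 2)
        atTop (nhds 0) := by
  have hW : ∀ k : ℤ, (0 : ℝ) < ((1 + |k| : ℤ) : ℝ) := fun k => by positivity
  have hW1 : ∀ k : ℤ, (1 : ℝ) ≤ ((1 + |k| : ℤ) : ℝ) := fun k => by
    push_cast; linarith [abs_nonneg (k : ℝ)]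
  have hsq : ∀ (r x : ℝ) (k : ℤ), ((1 + |k| : ℤ) : ℝ) ^ (2 * r) * x ^ 2
      = (((1 + |k| : ℤ) : ℝ) ^ r * x) ^ 2 := fun r x k => by
    rw [mul_pow, ← Real.rpow_mul_natCast (hW k).le]
    congr 2; push_cast; ring
  simp only [hsq] at hA hu ⊢
  -- Since the weights are at least `1`, the `H^s`-bound controls each coordinate.
  have hub : ∀ m k, ‖u m k‖ ≤ |C| := by
    intro m k
    have h1 := ((hu m).1.le_tsum k fun _ _ => sq_nonneg _).trans (hu m).2
    refine le_trans ?_ (abs_le_of_sq_le_sq' ((sq_abs C).symm ▸ h1) (abs_nonneg C)).2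
    exact le_mul_of_one_le_left (norm_nonneg _) (Real.one_le_rpow (hW1 k) (by linarith))
  obtain ⟨U, -, φ, hφ, hU⟩ := (isCompact_univ_pi fun _ : ℤ =>
    isCompact_closedBall (0 : Fin n → ℂ) |C|).tendsto_subseq (x := u)
      (fun m k _ => by simpa using hub m k)
  rw [tendsto_pi_nhds] at hU
  refine ⟨φ, hφ, ?_⟩
  set a : ℤ → ℝ := fun l => 2 * (((1 + |l| : ℤ) : ℝ) ^ s * ‖A l‖) with ha_def
  set b : ℤ → ℝ := fun h => ((1 + |h| : ℤ) : ℝ) ^ (-s) with hb_def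
  have ha0 : ∀ l, 0 ≤ a l := fun l =>
    mul_nonneg zero_le_two (mul_nonneg (Real.rpow_nonneg (hW l).le _) (norm_nonneg _))
  have hb0 : ∀ h, 0 ≤ b h := fun h => Real.rpow_nonneg (hW h).le _
  have ha : Summable (fun l => a l ^ 2) := by
    simpa only [ha_def, mul_pow] using hA.mul_left (2 ^ 2)
  have hb : Summable (fun h => b h ^ 2) := summable_weight hs1
  have hker : ∀ (k h : ℤ) (x : Fin n → ℂ), ((1 + |k| : ℤ) : ℝ) ^ (1 - s) *
      ‖(((|h| : ℤ) : ℝ) ^ (2 * (s - 1)) * (h : ℝ) -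
        ((|k| : ℤ) : ℝ) ^ (2 * (s - 1)) * (k : ℝ)) • (A (k - h)).mulVec x‖
      ≤ a (k - h) * b h * (((1 + |h| : ℤ) : ℝ) ^ s * ‖x‖) := by
    intro k h x
    have e : b h * ((1 + |h| : ℤ) : ℝ) ^ s = 1 := by
      rw [hb_def, ← Real.rpow_add (hW h)]; simp
    rw [norm_smul, Real.norm_eq_abs, ← mul_assoc]
    calc _ ≤ (2 * ((1 + |k - h| : ℤ) : ℝ) ^ s) * (‖A (k - h)‖ * ‖x‖) :=
          mul_le_mul (symbol_bound hs1 hs2 k h) (Matrix.linfty_opNorm_mulVec _ _) (norm_nonneg _)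
            (mul_nonneg zero_le_two (Real.rpow_nonneg (hW _).le _))
      _ = a (k - h) * (b h * ((1 + |h| : ℤ) : ℝ) ^ s) * ‖x‖ := by rw [e]; simp only [ha_def]; ring
      _ = _ := by ring
  have habv : ∀ (k : ℤ) (v : ℤ → ℝ), (∀ h, 0 ≤ v h) → Summable (fun h => v h ^ 2) →
      Summable (fun h => a (k - h) * b h * v h) := by
    intro k v hv0 hv
    have hB : ∀ h, b h * v h ≤ v h := fun h =>
      mul_le_of_le_one_left (hv0 h) (Real.rpow_le_one_of_one_le_of_nonpos (hW1 h) (by linarith))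
    have h1 := (cauchy_schwarz_tsum (fun h => ha0 (k - h)) hv0
      (((Equiv.subLeft k).summable_iff (f := fun i => a i ^ 2)).2 ha) hv).1
    refine Summable.of_nonneg_of_le
      (fun h => mul_nonneg (mul_nonneg (ha0 _) (hb0 h)) (hv0 h)) (fun h => ?_) h1
    rw [mul_assoc]
    exact mul_le_mul_of_nonneg_left (hB h) (ha0 _)
  have hsum : ∀ (k : ℤ) (x : ℤ → Fin n → ℂ),
      Summable (fun h : ℤ => (((1 + |h| : ℤ) : ℝ) ^ s * ‖x h‖) ^ 2) →
      Summable (fun h : ℤ => ‖(((|h| : ℤ) : ℝ) ^ (2 * (s - 1)) * (h : ℝ) -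
        ((|k| : ℤ) : ℝ) ^ (2 * (s - 1)) * (k : ℝ)) • (A (k - h)).mulVec (x h)‖) := by
    intro k x hx
    have h1 := habv k _ (fun h => mul_nonneg (Real.rpow_nonneg (hW h).le _) (norm_nonneg (x h))) hx
    have hWk : (0 : ℝ) < ((1 + |k| : ℤ) : ℝ) ^ (1 - s) := Real.rpow_pos_of_pos (hW k) _
    rw [← summable_mul_left_iff hWk.ne']
    exact Summable.of_nonneg_of_le (fun h => mul_nonneg hWk.le (norm_nonneg _))
      (fun h => hker k h (x h)) h1
  set v : ℕ × ℕ → ℤ → ℝ := fun p h =>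
    ((1 + |h| : ℤ) : ℝ) ^ s * ‖u (φ p.1) h - u (φ p.2) h‖ with hv_def
  have hv0 : ∀ p h, 0 ≤ v p h := fun p h =>
    mul_nonneg (Real.rpow_nonneg (hW h).le _) (norm_nonneg _)
  have hvle : ∀ p h, v p h ^ 2 ≤ 2 * (((1 + |h| : ℤ) : ℝ) ^ s * ‖u (φ p.1) h‖) ^ 2 +
      2 * (((1 + |h| : ℤ) : ℝ) ^ s * ‖u (φ p.2) h‖) ^ 2 := by
    intro p h
    have h1 : v p h ≤ ((1 + |h| : ℤ) : ℝ) ^ s * ‖u (φ p.1) h‖ +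
        ((1 + |h| : ℤ) : ℝ) ^ s * ‖u (φ p.2) h‖ := by
      rw [← mul_add]
      exact mul_le_mul_of_nonneg_left (norm_sub_le _ _) (Real.rpow_nonneg (hW h).le _)
    refine (pow_le_pow_left₀ (hv0 p h) h1 2).trans ?_
    linarith [add_sq_le (a := ((1 + |h| : ℤ) : ℝ) ^ s * ‖u (φ p.1) h‖)
      (b := ((1 + |h| : ℤ) : ℝ) ^ s * ‖u (φ p.2) h‖)]
  have hvs' := fun p : ℕ × ℕ => ((hu (φ p.1)).1.mul_left 2).add ((hu (φ p.2)).1.mul_left 2)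
  have hvs : ∀ p, Summable (fun h => v p h ^ 2) := fun p =>
    Summable.of_nonneg_of_le (fun h => sq_nonneg _) (hvle p) (hvs' p)
  have hvD : ∀ p, ∑' h, v p h ^ 2 ≤ 4 * C ^ 2 := by
    intro p
    refine ((hvs p).tsum_le_tsum (hvle p) (hvs' p)).trans ?_
    rw [((hu (φ p.1)).1.mul_left 2).tsum_add ((hu (φ p.2)).1.mul_left 2), tsum_mul_left,
      tsum_mul_left]
    linarith [(hu (φ p.1)).2, (hu (φ p.2)).2]
  have hlim : ∀ h, Tendsto (fun p => v p h) atTop (nhds 0) := by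
    intro h
    rw [← prod_atTop_atTop_eq]
    have h1 := (((hU h).comp tendsto_fst).sub ((hU h).comp tendsto_snd)
      (l := (atTop : Filter ℕ) ×ˢ (atTop : Filter ℕ))).norm.const_mul (((1 + |h| : ℤ) : ℝ) ^ s)
    simpa [hv_def] using h1
  obtain ⟨h1, h2⟩ := sum_sq_tendsto_zero (N := fun (p : ℕ × ℕ) (k : ℤ) =>
    ((1 + |k| : ℤ) : ℝ) ^ (1 - s) *
        ‖(∑' h : ℤ,
            (((|h| : ℤ) : ℝ) ^ (2 * (s - 1)) * (h : ℝ) -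
              ((|k| : ℤ) : ℝ) ^ (2 * (s - 1)) * (k : ℝ)) •
              (A (k - h)).mulVec (u (φ p.1) h))
          - (∑' h : ℤ,
            (((|h| : ℤ) : ℝ) ^ (2 * (s - 1)) * (h : ℝ) -
              ((|k| : ℤ) : ℝ) ^ (2 * (s - 1)) * (k : ℝ)) •
              (A (k - h)).mulVec (u (φ p.2) h))‖)
    ha0 hb0 ha hb hv0 hvs hvD hlim
    (fun p k => mul_nonneg (Real.rpow_nonneg (hW k).le _) (norm_nonneg _))
    (fun p k => by
      rw [← (hsum k _ (hu (φ p.1)).1).of_norm.tsum_sub (hsum k _ (hu (φ p.2)).1).of_norm]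
      simp only [← smul_sub, ← Matrix.mulVec_sub]
      have hd := hsum k (fun h => u (φ p.1) h - u (φ p.2) h) (hvs p)
      have hWk : (0 : ℝ) ≤ ((1 + |k| : ℤ) : ℝ) ^ (1 - s) := Real.rpow_nonneg (hW k).le _
      refine (mul_le_mul_of_nonneg_left (norm_tsum_le_tsum_norm hd) hWk).trans ?_
      rw [← tsum_mul_left]
      exact (hd.mul_left _).tsum_le_tsum (fun h => hker k h _) (habv k _ (hv0 p) (hvs p)))
  exact ⟨fun i j => h1 (i, j), h2⟩
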